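/- Let μ, ν be Borel probability measures on ℝ^{d_x} and ℝ^{d_y} with finite fourth moments. Let (ε_k)_{k∈ℕ} be a nonincreasing sequence of nonnegative reals converging to some ε ≥ 0, and for each k let π_k ∈ Π(μ,ν) be a minimizer of the S_{ε_k}-objective, i.e., π_k attains S_{ε_k}(μ,ν). Then there exist a subsequence (π_{k_j})_{j∈ℕ} and a coupling π ∈ Π(μ,ν) such that π_{k_j} converges weakly to π as j → ∞ and π attains S_ε(μ,ν). -/

import Mathlib

open MeasureTheory
open scoped ENNReal NNReal BigOperators

noncomputable section

/-- The set of couplings of two measures. -/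
def Couplings {E F : Type*} [MeasurableSpace E] [MeasurableSpace F]
    (μ : Measure E) (ν : Measure F) : Set (Measure (E × F)) :=
  {π | IsProbabilityMeasure π ∧ π.map Prod.fst = μ ∧ π.map Prod.snd = ν}

/-- Quadratic (2,2) GW distortion cost of a coupling. -/
def GWCost {E F : Type*} [NormedAddCommGroup E] [NormedAddCommGroup F]
    [MeasurableSpace E] [MeasurableSpace F] (π : Measure (E × F)) : ℝ :=
  ∫ p, (‖p.1.1 - p.2.1‖ ^ 2 - ‖p.1.2 - p.2.2‖ ^ 2) ^ 2 ∂(π.prod π)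

open Classical in
/-- KL divergence, with value `⊤` when it is not finite. -/
def KLD {Z : Type*} [MeasurableSpace Z] (π ρ : Measure Z) : ℝ≥0∞ :=
  if π ≪ ρ ∧ Integrable (MeasureTheory.llr π ρ) π then
    ENNReal.ofReal (∫ z, MeasureTheory.llr π ρ z ∂π) else ⊤

/-- ε-weighted entropic penalty. -/
def entTerm {Z : Type*} [MeasurableSpace Z] (ε : ℝ) (π ρ : Measure Z) : ℝ≥0∞ :=
  ENNReal.ofReal ε * KLD π ρ

/-- Entropic (2,2) Gromov–Wasserstein cost `S_ε`. -/
def SEps {E F : Type*} [NormedAddCommGroup E] [NormedAddCommGroup F]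
    [MeasurableSpace E] [MeasurableSpace F] (ε : ℝ) (μ : Measure E) (ν : Measure F) : ℝ :=
  sInf {v | ∃ π ∈ Couplings μ ν,
    entTerm ε π (μ.prod ν) ≠ ⊤ ∧ v = GWCost π + (entTerm ε π (μ.prod ν)).toReal}

/-- Squared (2,2) Gromov–Wasserstein distance `D(μ,ν)²`. -/
def GWsq {E F : Type*} [NormedAddCommGroup E] [NormedAddCommGroup F]
    [MeasurableSpace E] [MeasurableSpace F] (μ : Measure E) (ν : Measure F) : ℝ :=
  sInf {v | ∃ π ∈ Couplings μ ν, v = GWCost π}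

/-!
The proof is the direct method. Couplings of `μ` and `ν` are tight, so by Prokhorov's theorem a
subsequence of the minimizers converges weakly to a coupling `π` (`exists_subseq_tendsto`,
`mem_couplings_of_tendsto`). It remains to pass to the limit in the inequality
`GW(π_k) + ε_k KL(π_k) ≤ GW(γ) + ε_k KL(γ)` for each competitor `γ`.

The integrand of the GW cost is unbounded, but it is dominated by a continuous function of fourth
moments whose integral depends only on the marginals. The cost is therefore weakly continuous on
couplings, not merely lower semicontinuous (`tendsto_GWCost`).

If `ε > 0`, competitors of finite penalty have finite entropy, and the conclusion follows from weak
lower semicontinuity of the relative entropy (`klDiv_le_of_tendsto`), which comes from its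
variational formula: `KL(P‖ρ) ≤ K` holds if and only if `∫ g dP ≤ K + ∫ (exp g - 1) dρ` for all
bounded continuous `g`.

If `ε = 0`, the penalty of the limit objective vanishes, so competitors of infinite entropy are also
admissible. The limiting inequality holds for those of finite entropy because `ε_k KL(γ) → 0`. An
arbitrary coupling is a weak limit of couplings of finite entropy, obtained by replacing it on the
cells of finer and finer finite partitions by multiples of `μ ⊗ ν` (`exists_tendsto_klDiv_ne_top`),
and continuity of the cost extends the inequality to it.
-/

open Filter Topology

/-! ### Weak continuity of the Gromov–Wasserstein cost and compactness of couplings -/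

section Weak

variable {Ω : Type*} [MeasurableSpace Ω] [TopologicalSpace Ω] [OpensMeasurableSpace Ω]
  [HasOuterApproxClosed Ω]

/-- Lower semicontinuity of the integral of a nonnegative, possibly unbounded, continuous function
under weak convergence. -/
theorem eventually_integral_gt {P : ProbabilityMeasure Ω} {Ps : ℕ → ProbabilityMeasure Ω}
    (hP : Tendsto Ps atTop (𝓝 P)) {g : Ω → ℝ} (hg : Continuous g) (hg0 : 0 ≤ g)
    (hint : ∀ k, Integrable g (Ps k : Measure Ω)) (hintP : Integrable g (P : Measure Ω))
    {a : ℝ} (ha : a < ∫ x, g x ∂(P : Measure Ω)) :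
    ∀ᶠ k in atTop, a < ∫ x, g x ∂(Ps k : Measure Ω) := by
  have hlsc := lintegral_le_liminf_lintegral_of_forall_isOpen_measure_le_liminf_measure hg hg0
    (μ := (P : Measure Ω)) (μs := fun k => (Ps k : Measure Ω))
    (fun G hG => ProbabilityMeasure.le_liminf_measure_open_of_tendsto hP hG)
  rcases lt_or_ge a 0 with h | h
  · exact Eventually.of_forall fun k => h.trans_le (integral_nonneg hg0)
  have h1 : ENNReal.ofReal a < ∫⁻ x, ENNReal.ofReal (g x) ∂(P : Measure Ω) := by
    rw [← ofReal_integral_eq_lintegral_ofReal hintP (Eventually.of_forall hg0)]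
    exact (ENNReal.ofReal_lt_ofReal_iff (h.trans_lt ha)).2 ha
  filter_upwards [eventually_lt_of_lt_liminf (h1.trans_le hlsc)] with k hk
  rw [← ofReal_integral_eq_lintegral_ofReal (hint k) (Eventually.of_forall hg0)] at hk
  exact (ENNReal.ofReal_lt_ofReal_iff_of_nonneg h).1 hk

/-- If `0 ≤ c ≤ H` with `H` continuous and of constant integral along the sequence, then weak
convergence carries the integral of `c` to the limit: lower semicontinuity applies both to `c` and
to `H - c`. -/
theorem tendsto_integral_of_dominated {P : ProbabilityMeasure Ω} {Ps : ℕ → ProbabilityMeasure Ω}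
    (hP : Tendsto Ps atTop (𝓝 P)) {c H : Ω → ℝ} (hc : Continuous c) (hH : Continuous H)
    (hc0 : 0 ≤ c) (hcH : c ≤ H)
    (hint : ∀ k, Integrable H (Ps k : Measure Ω)) (hintP : Integrable H (P : Measure Ω))
    (hconst : ∀ k, ∫ x, H x ∂(Ps k : Measure Ω) = ∫ x, H x ∂(P : Measure Ω)) :
    Tendsto (fun k => ∫ x, c x ∂(Ps k : Measure Ω)) atTop (𝓝 (∫ x, c x ∂(P : Measure Ω))) := by
  have hci : ∀ Q : Measure Ω, Integrable H Q → Integrable c Q := fun Q h =>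
    h.mono' hc.measurable.aestronglyMeasurable (Eventually.of_forall fun x => by
      rw [Real.norm_of_nonneg (hc0 x)]; exact hcH x)
  refine tendsto_order.2 ⟨fun a ha => ?_, fun a ha => ?_⟩
  · exact eventually_integral_gt hP hc hc0 (fun k => hci _ (hint k)) (hci _ hintP) ha
  · have := eventually_integral_gt hP (hH.sub hc) (fun x => sub_nonneg.2 (hcH x))
      (fun k => (hint k).sub (hci _ (hint k))) (hintP.sub (hci _ hintP))
      (a := (∫ x, H x ∂(P : Measure Ω)) - a) (by
        simp only [Pi.sub_apply]
        rw [integral_sub hintP (hci _ hintP)]; linarith)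
    filter_upwards [this] with k hk
    simp only [Pi.sub_apply] at hk
    rw [integral_sub (hint k) (hci _ (hint k)), hconst k] at hk
    linarith

end Weak

section GW

variable {E F : Type*} [NormedAddCommGroup E] [NormedAddCommGroup F]

/-- A dominating function for the Gromov–Wasserstein integrand, whose integral against `π.prod π`
depends only on the marginals of `π`. -/
def gwDom (p : (E × F) × E × F) : ℝ :=
  8 * (‖p.1.1‖ ^ 4 + ‖p.1.2‖ ^ 4) + 8 * (‖p.2.1‖ ^ 4 + ‖p.2.2‖ ^ 4)

theorem norm_sub_pow_four_le (x y : E) : ‖x - y‖ ^ 4 ≤ 8 * (‖x‖ ^ 4 + ‖y‖ ^ 4) := by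
  have h1 : ‖x - y‖ ^ 4 ≤ (‖x‖ + ‖y‖) ^ 4 := by gcongr; exact norm_sub_le x y
  refine h1.trans ?_
  have := add_pow_le (norm_nonneg x) (norm_nonneg y) 4
  norm_num at this ⊢
  linarith

theorem gw_le_gwDom (p : (E × F) × E × F) :
    (‖p.1.1 - p.2.1‖ ^ 2 - ‖p.1.2 - p.2.2‖ ^ 2) ^ 2 ≤ gwDom p := by
  have h1 := norm_sub_pow_four_le p.1.1 p.2.1
  have h2 := norm_sub_pow_four_le p.1.2 p.2.2
  have h3 : 0 ≤ ‖p.1.1 - p.2.1‖ ^ 2 * ‖p.1.2 - p.2.2‖ ^ 2 := by positivity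
  unfold gwDom
  nlinarith

variable [MeasurableSpace E] [MeasurableSpace F] [BorelSpace E] [BorelSpace F]
  [SecondCountableTopology F]

/-- Weak limits of couplings are couplings, since projections are continuous. -/
theorem mem_couplings_of_tendsto {μ : Measure E} {ν : Measure F}
    {P : ProbabilityMeasure (E × F)} {Ps : ℕ → ProbabilityMeasure (E × F)}
    (hP : Tendsto Ps atTop (𝓝 P))
    (hPs : ∀ k, (Ps k : Measure (E × F)) ∈ Couplings μ ν) :
    (P : Measure (E × F)) ∈ Couplings μ ν := by
  refine ⟨inferInstance, ?_, ?_⟩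
  · have h1 := ProbabilityMeasure.tendsto_map_of_tendsto_of_continuous Ps P hP continuous_fst
    have h2 : ∀ k, (Ps k).map continuous_fst.measurable.aemeasurable
        = (Ps 0).map continuous_fst.measurable.aemeasurable := fun k =>
      Subtype.ext ((hPs k).2.1.trans (hPs 0).2.1.symm)
    simp_rw [h2] at h1
    have h3 := tendsto_nhds_unique h1 tendsto_const_nhds
    exact (congrArg (fun Q : ProbabilityMeasure E => (Q : Measure E)) h3).trans (hPs 0).2.1
  · have h1 := ProbabilityMeasure.tendsto_map_of_tendsto_of_continuous Ps P hP continuous_snd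
    have h2 : ∀ k, (Ps k).map continuous_snd.measurable.aemeasurable
        = (Ps 0).map continuous_snd.measurable.aemeasurable := fun k =>
      Subtype.ext ((hPs k).2.2.trans (hPs 0).2.2.symm)
    simp_rw [h2] at h1
    have h3 := tendsto_nhds_unique h1 tendsto_const_nhds
    exact (congrArg (fun Q : ProbabilityMeasure F => (Q : Measure F)) h3).trans (hPs 0).2.2

variable [SecondCountableTopology E]

theorem integral_gwDom {μ : Measure E} {ν : Measure F}
    (h4μ : Integrable (fun x => ‖x‖ ^ 4) μ) (h4ν : Integrable (fun y => ‖y‖ ^ 4) ν)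
    {π : Measure (E × F)} (hπ : π ∈ Couplings μ ν) :
    Integrable gwDom (π.prod π) ∧
      ∫ p, gwDom p ∂(π.prod π) = 16 * (∫ x, ‖x‖ ^ 4 ∂μ + ∫ y, ‖y‖ ^ 4 ∂ν) := by
  obtain ⟨hp, h1, h2⟩ := hπ
  subst h1 h2
  have i1 : Integrable (fun p : E × F => ‖p.1‖ ^ 4) π :=
    h4μ.comp_measurable measurable_fst
  have i2 : Integrable (fun p : E × F => ‖p.2‖ ^ 4) π :=
    h4ν.comp_measurable measurable_snd
  have i3 : Integrable (fun p : E × F => 8 * (‖p.1‖ ^ 4 + ‖p.2‖ ^ 4)) π := (i1.add i2).const_mul 8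
  have j1 : Integrable (fun p : (E × F) × E × F => 8 * (‖p.1.1‖ ^ 4 + ‖p.1.2‖ ^ 4)) (π.prod π) :=
    i3.comp_fst π
  have j2 : Integrable (fun p : (E × F) × E × F => 8 * (‖p.2.1‖ ^ 4 + ‖p.2.2‖ ^ 4)) (π.prod π) :=
    i3.comp_snd π
  refine ⟨j1.add j2, ?_⟩
  unfold gwDom
  rw [integral_add j1 j2, integral_fun_fst (μ := π) (ν := π)
      (f := fun p : E × F => 8 * (‖p.1‖ ^ 4 + ‖p.2‖ ^ 4)), integral_fun_snd (μ := π) (ν := π)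
      (f := fun p : E × F => 8 * (‖p.1‖ ^ 4 + ‖p.2‖ ^ 4)), integral_const_mul,
      integral_add i1 i2, integral_map measurable_fst.aemeasurable (by fun_prop),
      integral_map measurable_snd.aemeasurable (by fun_prop)]
  simp
  ring

/-- The Gromov–Wasserstein cost is weakly continuous on the couplings of two measures with finite
fourth moments. -/
theorem tendsto_GWCost {μ : Measure E} {ν : Measure F}
    (h4μ : Integrable (fun x => ‖x‖ ^ 4) μ) (h4ν : Integrable (fun y => ‖y‖ ^ 4) ν)
    {P : ProbabilityMeasure (E × F)} {Ps : ℕ → ProbabilityMeasure (E × F)}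
    (hP : Tendsto Ps atTop (𝓝 P)) (hPc : (P : Measure (E × F)) ∈ Couplings μ ν)
    (hPs : ∀ k, (Ps k : Measure (E × F)) ∈ Couplings μ ν) :
    Tendsto (fun k => GWCost (Ps k : Measure (E × F))) atTop (𝓝 (GWCost (P : Measure (E × F)))) := by
  have hPP : Tendsto (fun k => (Ps k).prod (Ps k)) atTop (𝓝 (P.prod P)) :=
    (ProbabilityMeasure.continuous_prod.tendsto (P, P)).comp (hP.prodMk_nhds hP)
  refine tendsto_integral_of_dominated hPP (H := gwDom)
    (c := fun p => (‖p.1.1 - p.2.1‖ ^ 2 - ‖p.1.2 - p.2.2‖ ^ 2) ^ 2) (by fun_prop)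
    (by unfold gwDom; fun_prop) (fun p => sq_nonneg _) gw_le_gwDom
    (fun k => (integral_gwDom h4μ h4ν (hPs k)).1) (integral_gwDom h4μ h4ν hPc).1 (fun k => ?_)
  exact (integral_gwDom h4μ h4ν (hPs k)).2.trans (integral_gwDom h4μ h4ν hPc).2.symm

/-- Couplings of two fixed measures are tight, so Prokhorov's theorem extracts a convergent
subsequence. -/
theorem exists_subseq_tendsto [CompleteSpace E] [CompleteSpace F]
    {μ : Measure E} {ν : Measure F} [IsProbabilityMeasure μ] [IsProbabilityMeasure ν]
    {Ps : ℕ → ProbabilityMeasure (E × F)}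
    (hPs : ∀ k, (Ps k : Measure (E × F)) ∈ Couplings μ ν) :
    ∃ P : ProbabilityMeasure (E × F), ∃ φ : ℕ → ℕ, StrictMono φ ∧
      Tendsto (Ps ∘ φ) atTop (𝓝 P) := by
  have ht : IsTightMeasureSet
      {((Q : ProbabilityMeasure (E × F)) : Measure (E × F)) | Q ∈ Set.range Ps} := by
    refine IsTightMeasureSet.prodMk ((isTightMeasureSet_singleton (μ := μ)).subset ?_)
      ((isTightMeasureSet_singleton (μ := ν)).subset ?_)
    · rintro _ ⟨_, ⟨_, ⟨k, rfl⟩, rfl⟩, rfl⟩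
      exact (hPs k).2.1
    · rintro _ ⟨_, ⟨_, ⟨k, rfl⟩, rfl⟩, rfl⟩
      exact (hPs k).2.2
  obtain ⟨P, -, φ, hφ, hlim⟩ := (isCompact_closure_of_isTightMeasureSet ht).tendsto_subseq
    (fun k => subset_closure (Set.mem_range_self k))
  exact ⟨P, φ, hφ, hlim⟩

end GW

/-! ### Lower semicontinuity of the relative entropy -/

section Entropy

open InformationTheory

theorem KLD_eq_klDiv {Z : Type*} [MeasurableSpace Z] (π ρ : Measure Z) [IsProbabilityMeasure π]
    [IsProbabilityMeasure ρ] : KLD π ρ = klDiv π ρ := by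
  by_cases h : π ≪ ρ ∧ Integrable (llr π ρ) π
  · rw [KLD, if_pos h, klDiv_of_ac_of_integrable h.1 h.2]; simp
  · rw [KLD, if_neg h]
    exact (klDiv_eq_top_iff.2 fun h1 h2 => h ⟨h1, h2⟩).symm

/-- Young's inequality for `klFun` and its convex conjugate `t ↦ exp t - 1`. -/
theorem mul_le_klFun_add_exp {r : ℝ} (hr : 0 ≤ r) (t : ℝ) :
    r * t ≤ klFun r + (Real.exp t - 1) := by
  rw [klFun_apply]
  rcases hr.eq_or_lt with rfl | h
  · simp; positivity
  · have h1 : Real.exp t = r * Real.exp (t - Real.log r) := by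
      rw [Real.exp_sub, Real.exp_log h]; field_simp
    have h2 := mul_le_mul_of_nonneg_left (Real.add_one_le_exp (t - Real.log r)) hr
    rw [h1]; nlinarith

variable {Ω : Type*} [MeasurableSpace Ω] {P ρ : Measure Ω} [IsProbabilityMeasure P]
  [IsProbabilityMeasure ρ] {K : ℝ}

theorem integrable_exp_sub_one {u : Ω → ℝ} (hu : Measurable u) {M : ℝ} (hM : ∀ x, |u x| ≤ M) :
    Integrable (fun x => Real.exp (u x) - 1) ρ := by
  refine (Integrable.of_bound (C := Real.exp M) (by fun_prop)
    (Eventually.of_forall fun x => ?_)).sub (integrable_const 1)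
  rw [Real.norm_of_nonneg (Real.exp_pos _).le]
  exact Real.exp_le_exp.2 ((le_abs_self _).trans (hM x))

/-- The easy half of the variational formula for the relative entropy:
`∫ g dP - ∫ (exp g - 1) dρ ≤ KL(P‖ρ)`. -/
theorem integral_le_of_klDiv_le (hK : 0 ≤ K) (h : klDiv P ρ ≤ ENNReal.ofReal K) {g : Ω → ℝ}
    (hg : Measurable g) {M : ℝ} (hM : ∀ x, |g x| ≤ M) :
    ∫ x, g x ∂P ≤ K + ∫ x, (Real.exp (g x) - 1) ∂ρ := by
  have hne : klDiv P ρ ≠ ⊤ := (h.trans_lt ENNReal.ofReal_lt_top).ne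
  obtain ⟨hac, hint⟩ := klDiv_ne_top_iff.1 hne
  have h1 : ∫ x, klFun (P.rnDeriv ρ x).toReal ∂ρ ≤ K := by
    rw [← toReal_klDiv_eq_integral_klFun hac]
    exact ENNReal.toReal_le_of_le_ofReal hK h
  have i1 : Integrable (fun x => klFun (P.rnDeriv ρ x).toReal) ρ :=
    (integrable_klFun_rnDeriv_iff hac).2 hint
  have i2 : Integrable (fun x => Real.exp (g x) - 1) ρ := integrable_exp_sub_one hg hM
  have i3 : Integrable (fun x => (P.rnDeriv ρ x).toReal * g x) ρ :=
    (Measure.integrable_toReal_rnDeriv (μ := P) (ν := ρ)).mul_bdd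
      hg.aestronglyMeasurable (Eventually.of_forall hM)
  have h2 : ∫ x, g x ∂P = ∫ x, (P.rnDeriv ρ x).toReal * g x ∂ρ :=
    (integral_rnDeriv_smul hac).symm
  rw [h2]
  calc ∫ x, (P.rnDeriv ρ x).toReal * g x ∂ρ
      ≤ ∫ x, (klFun (P.rnDeriv ρ x).toReal + (Real.exp (g x) - 1)) ∂ρ :=
        integral_mono i3 (i1.add i2) fun x => mul_le_klFun_add_exp ENNReal.toReal_nonneg _
    _ ≤ _ := by rw [integral_add i1 i2]; linarith

theorem abs_exp_sub_exp_le {a b M : ℝ} (ha : a ≤ M) (hb : b ≤ M) :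
    |Real.exp a - Real.exp b| ≤ Real.exp M * |a - b| := by
  wlog hab : b ≤ a generalizing a b
  · rw [abs_sub_comm, abs_sub_comm a b]; exact this hb ha (le_of_not_ge hab)
  rw [abs_of_nonneg (sub_nonneg.2 hab), abs_of_nonneg (sub_nonneg.2 (Real.exp_le_exp.2 hab))]
  have h1 : Real.exp b = Real.exp a * Real.exp (b - a) := by rw [← Real.exp_add]; ring_nf
  have h2 := mul_le_mul_of_nonneg_left (Real.add_one_le_exp (b - a)) (Real.exp_pos a).le
  have h3 := mul_le_mul_of_nonneg_right (Real.exp_le_exp.2 ha) (sub_nonneg.2 hab)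
  rw [h1]; nlinarith

/-- The variational inequality extends from bounded continuous to bounded measurable test functions,
by density of the former in `L¹(P + ρ)`. -/
theorem integral_le_of_forall_boundedContinuous [PseudoMetricSpace Ω] [BorelSpace Ω]
    (h : ∀ g : BoundedContinuousFunction Ω ℝ,
      ∫ x, g x ∂P ≤ K + ∫ x, (Real.exp (g x) - 1) ∂ρ)
    {f : Ω → ℝ} (hf : Measurable f) {M : ℝ} (hM : ∀ x, |f x| ≤ M) :
    ∫ x, f x ∂P ≤ K + ∫ x, (Real.exp (f x) - 1) ∂ρ := by
  have hint : ∀ (Q : Measure Ω) [IsProbabilityMeasure Q] (u : Ω → ℝ), Measurable u →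
      (∀ x, |u x| ≤ M) → Integrable u Q := fun Q _ u hu hub =>
    Integrable.of_bound (C := M) (by fun_prop) (Eventually.of_forall hub)
  refine le_of_forall_pos_le_add fun δ hδ => ?_
  obtain ⟨η, hη, hηδ⟩ : ∃ η : ℝ, 0 < η ∧ η + Real.exp M * η = δ :=
    ⟨δ / (1 + Real.exp M), by positivity, by field_simp⟩
  have hfi : Integrable f (P + ρ) := (hint P f hf hM).add_measure (hint ρ f hf hM)
  obtain ⟨g, hg, hgi⟩ := hfi.exists_boundedContinuous_integral_sub_le hη
  -- clamping `g` to `[-M, M]` does not increase its distance to `f`, and makes `exp` Lipschitz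
  have hcont : Continuous fun x => max (-M) (min M (g x)) := by fun_prop
  have hMnn : ∀ x : Ω, 0 ≤ M := fun x => (abs_nonneg _).trans (hM x)
  have hb : ∀ x, |max (-M) (min M (g x))| ≤ M := fun x =>
    abs_le.2 ⟨le_max_left _ _, max_le (by linarith [hMnn x]) (min_le_left _ _)⟩
  let g' : BoundedContinuousFunction Ω ℝ :=
    BoundedContinuousFunction.ofNormedAddCommGroup _ hcont M hb
  have hg'b : ∀ x, |g' x| ≤ M := hb
  have hg'm : Measurable g' := hcont.measurable
  have hdist : ∀ x, |f x - g' x| ≤ ‖f x - g x‖ := fun x => by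
    change |f x - max (-M) (min M (g x))| ≤ |f x - g x|
    have h3 := abs_le.1 (hM x)
    have h4 : f x = max (-M) (min M (f x)) := by rw [min_eq_right h3.2, max_eq_right h3.1]
    calc |f x - max (-M) (min M (g x))|
        = |max (min M (f x)) (-M) - max (min M (g x)) (-M)| := by
          conv_lhs => rw [h4]
          rw [max_comm, max_comm (-M)]
      _ ≤ |min M (f x) - min M (g x)| := abs_max_sub_max_le_abs _ _ _
      _ = |min (f x) M - min (g x) M| := by rw [min_comm, min_comm M]
      _ ≤ |f x - g x| := by
          simpa using abs_min_sub_min_le_max (f x) M (g x) M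
  have hfg : ∀ (Q : Measure Ω) [IsProbabilityMeasure Q], Integrable (fun x => |f x - g' x|) Q :=
    fun Q _ => ((hint Q f hf hM).sub (hint Q _ hg'm hg'b)).abs
  have hfgi : Integrable (fun x => ‖f x - g x‖) (P + ρ) := (hfi.sub hgi).norm
  rw [integral_add_measure hfgi.left_of_add_measure hfgi.right_of_add_measure] at hg
  have e1 : ∫ x, |f x - g' x| ∂P ≤ ∫ x, ‖f x - g x‖ ∂P :=
    integral_mono (hfg P) hfgi.left_of_add_measure hdist
  have e2 : ∫ x, |f x - g' x| ∂ρ ≤ ∫ x, ‖f x - g x‖ ∂ρ :=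
    integral_mono (hfg ρ) hfgi.right_of_add_measure hdist
  have e3 : 0 ≤ ∫ x, ‖f x - g x‖ ∂P := integral_nonneg fun _ => norm_nonneg _
  have e4 : 0 ≤ ∫ x, ‖f x - g x‖ ∂ρ := integral_nonneg fun _ => norm_nonneg _
  have e5 : ∫ x, f x ∂P ≤ ∫ x, g' x ∂P + ∫ x, |f x - g' x| ∂P := by
    rw [← integral_add (hint P _ hg'm hg'b) (hfg P)]
    refine integral_mono (hint P f hf hM) ((hint P _ hg'm hg'b).add (hfg P)) fun x => ?_
    have := le_abs_self (f x - g' x)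
    simp only; linarith
  have e6 : ∫ x, (Real.exp (g' x) - 1) ∂ρ ≤
      ∫ x, (Real.exp (f x) - 1) ∂ρ + Real.exp M * ∫ x, |f x - g' x| ∂ρ := by
    have i1 := (hfg ρ).const_mul (Real.exp M)
    rw [← integral_const_mul, ← integral_add (integrable_exp_sub_one hf hM) i1]
    refine integral_mono (integrable_exp_sub_one hg'm hg'b)
      ((integrable_exp_sub_one hf hM).add i1) fun x => ?_
    have h5 := abs_exp_sub_exp_le ((le_abs_self _).trans (hM x)) ((le_abs_self _).trans (hg'b x))
    have h6 := neg_abs_le (Real.exp (f x) - Real.exp (g' x))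
    linarith
  have e7 := h g'
  have e8 : Real.exp M * ∫ x, |f x - g' x| ∂ρ ≤ Real.exp M * η := by gcongr; linarith
  linarith

/-- The logarithm of `r` clamped to `[1 / (n + 1), n + 1]`. For `r = dP/dρ` these functions are
bounded and asymptotically optimal in the variational formula for `KL(P‖ρ)`. -/
def truncLog (n : ℕ) (r : ℝ) : ℝ := Real.log (max (min r (n + 1)) (n + 1 : ℝ)⁻¹)

theorem measurable_truncLog (n : ℕ) : Measurable (truncLog n) := by
  unfold truncLog; fun_prop

theorem exp_truncLog (n : ℕ) (r : ℝ) :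
    Real.exp (truncLog n r) = max (min r (n + 1)) (n + 1 : ℝ)⁻¹ :=
  Real.exp_log (lt_of_lt_of_le (by positivity) (le_max_right _ _))

theorem abs_truncLog_le (n : ℕ) (r : ℝ) : |truncLog n r| ≤ Real.log (n + 1) := by
  have h1 : (1 : ℝ) ≤ n + 1 := by linarith [n.cast_nonneg (α := ℝ)]
  have h0 : (0 : ℝ) < n + 1 := by linarith
  have h2 : (n + 1 : ℝ)⁻¹ ≤ 1 := inv_le_one_of_one_le₀ h1
  refine abs_le.2 ⟨?_, ?_⟩
  · rw [← Real.log_inv]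
    exact Real.log_le_log (by positivity) (le_max_right _ _)
  · exact Real.log_le_log (lt_of_lt_of_le (by positivity) (le_max_right _ _))
      (max_le (min_le_right _ _) (h2.trans h1))

/-- With `t` the clamped value of `r`, the integrand is `klFun t + (r - t) * log t`; clamping
gives `r - t` and `log t` the same sign. -/
theorem truncLog_integrand_nonneg (n : ℕ) (r : ℝ) :
    0 ≤ r * truncLog n r - (Real.exp (truncLog n r) - 1) := by
  set t := Real.exp (truncLog n r) with ht
  have ht0 : 0 < t := Real.exp_pos _
  have hlog : truncLog n r = Real.log t := by rw [ht, Real.log_exp]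
  have hkl : 0 ≤ t * Real.log t + 1 - t := by
    have := klFun_nonneg ht0.le; rwa [klFun_apply] at this
  have h1 : (1 : ℝ) ≤ n + 1 := by linarith [n.cast_nonneg (α := ℝ)]
  have h2 : (n + 1 : ℝ)⁻¹ ≤ 1 := inv_le_one_of_one_le₀ h1
  rw [hlog]
  suffices t * Real.log t ≤ r * Real.log t by linarith
  have hte : t = max (min r (n + 1)) (n + 1 : ℝ)⁻¹ := exp_truncLog n r
  rcases le_total r (n + 1 : ℝ)⁻¹ with h | h
  · have : t = (n + 1 : ℝ)⁻¹ := by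
      rw [hte]; exact max_eq_right ((min_le_left _ _).trans h)
    have hl : Real.log t ≤ 0 := Real.log_nonpos ht0.le (this ▸ h2)
    exact mul_le_mul_of_nonpos_right (this ▸ h) hl
  rcases le_total r (n + 1 : ℝ) with h' | h'
  · have : t = r := by rw [hte, min_eq_left h', max_eq_left h]
    rw [this]
  · have : t = n + 1 := by rw [hte, min_eq_right h', max_eq_left (h2.trans h1)]
    exact mul_le_mul_of_nonneg_right (this ▸ h') (Real.log_nonneg (this ▸ h1))

theorem tendsto_truncLog_integrand {r : ℝ} (hr : 0 ≤ r) :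
    Tendsto (fun n => r * truncLog n r - (Real.exp (truncLog n r) - 1)) atTop (𝓝 (klFun r)) := by
  rcases hr.eq_or_lt with rfl | h
  · simp_rw [exp_truncLog]
    have h1 : ∀ n : ℕ, max (min 0 ((n : ℝ) + 1)) (n + 1 : ℝ)⁻¹ = 1 / ((n : ℝ) + 1) := fun n => by
      rw [min_eq_left (by positivity), max_eq_right (by positivity), one_div]
    simp_rw [h1]
    have := (tendsto_one_div_add_atTop_nhds_zero_nat (𝕜 := ℝ)).const_sub 1
    simpa [klFun_zero] using this
  · refine tendsto_const_nhds.congr' ?_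
    have h1 : ∀ᶠ n : ℕ in atTop, 1 / ((n : ℝ) + 1) < r :=
      (tendsto_one_div_add_atTop_nhds_zero_nat (𝕜 := ℝ)).eventually_lt_const h
    filter_upwards [h1, eventually_ge_atTop ⌈r⌉₊] with n hn1 hn2
    have h2 : r ≤ n + 1 := (Nat.le_ceil r).trans (by
      have : (⌈r⌉₊ : ℝ) ≤ n := by exact_mod_cast hn2
      linarith)
    have h3 : max (min r ((n : ℝ) + 1)) (n + 1 : ℝ)⁻¹ = r := by
      rw [min_eq_left h2, max_eq_left (by rw [← one_div]; exact hn1.le)]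
    rw [exp_truncLog, h3, truncLog, h3, klFun_apply]; ring

/-- The converse half of the variational formula. Multiples of indicators of `ρ`-null sets force
`P ≪ ρ`; the functions `truncLog n (dP/dρ)` and Fatou's lemma then give the bound. -/
theorem klDiv_le_of_forall_bounded
    (h : ∀ (f : Ω → ℝ) (M : ℝ), Measurable f → (∀ x, |f x| ≤ M) →
      ∫ x, f x ∂P ≤ K + ∫ x, (Real.exp (f x) - 1) ∂ρ) :
    klDiv P ρ ≤ ENNReal.ofReal K := by
  have hac : P ≪ ρ := by
    refine Measure.AbsolutelyContinuous.mk fun A hA hρ => ?_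
    by_contra hne
    have hpos : 0 < P.real A := ENNReal.toReal_pos hne (measure_ne_top _ _)
    obtain ⟨n, hn⟩ := exists_nat_gt (K / P.real A)
    have h1 := h (A.indicator fun _ => (n : ℝ)) n (measurable_const.indicator hA) (fun x => by
      by_cases hx : x ∈ A <;> simp [hx])
    have h2 : ∫ x, (Real.exp (A.indicator (fun _ => (n : ℝ)) x) - 1) ∂ρ = 0 := by
      refine integral_eq_zero_of_ae ?_
      filter_upwards [measure_eq_zero_iff_ae_notMem.1 hρ] with x hx
      simp [hx]
    rw [h2, integral_indicator_const _ hA] at h1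
    rw [div_lt_iff₀ hpos] at hn
    simp only [smul_eq_mul] at h1
    linarith
  rw [klDiv_eq_lintegral_klFun_of_ac hac]
  set r : Ω → ℝ := fun x => (P.rnDeriv ρ x).toReal with hr
  have hrm : Measurable r := by fun_prop
  have hr0 : ∀ x, 0 ≤ r x := fun x => ENNReal.toReal_nonneg
  set u : ℕ → Ω → ℝ := fun n x => r x * truncLog n (r x) - (Real.exp (truncLog n (r x)) - 1) with hu
  have hum : ∀ n, Measurable (u n) := fun n => by
    have := (measurable_truncLog n).comp hrm
    exact (hrm.mul this).sub ((Real.measurable_exp.comp this).sub_const 1)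
  have hbd : ∀ n, ∫⁻ x, ENNReal.ofReal (u n x) ∂ρ ≤ ENNReal.ofReal K := fun n => by
    have hm : Measurable fun x => truncLog n (r x) := (measurable_truncLog n).comp hrm
    have i1 : Integrable (fun x => r x * truncLog n (r x)) ρ :=
      (Measure.integrable_toReal_rnDeriv (μ := P) (ν := ρ)).mul_bdd
        hm.aestronglyMeasurable (Eventually.of_forall fun x => abs_truncLog_le n (r x))
    have i2 : Integrable (fun x => Real.exp (truncLog n (r x)) - 1) ρ :=
      integrable_exp_sub_one hm fun x => abs_truncLog_le n (r x)
    rw [← ofReal_integral_eq_lintegral_ofReal (show Integrable (u n) ρ from i1.sub i2)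
      (Eventually.of_forall fun x => truncLog_integrand_nonneg n (r x))]
    refine ENNReal.ofReal_le_ofReal ?_
    have h1 := h _ _ hm (fun x => abs_truncLog_le n (r x))
    have h2 : ∫ x, truncLog n (r x) ∂P = ∫ x, r x * truncLog n (r x) ∂ρ :=
      (integral_rnDeriv_smul hac).symm
    simp only [hu]
    rw [integral_sub i1 i2]
    linarith
  calc ∫⁻ x, ENNReal.ofReal (klFun (r x)) ∂ρ
      = ∫⁻ x, liminf (fun n => ENNReal.ofReal (u n x)) atTop ∂ρ := by
        refine lintegral_congr fun x => ?_
        exact ((ENNReal.tendsto_ofReal (tendsto_truncLog_integrand (hr0 x))).liminf_eq).symm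
    _ ≤ liminf (fun n => ∫⁻ x, ENNReal.ofReal (u n x) ∂ρ) atTop :=
        lintegral_liminf_le fun n => (hum n).ennreal_ofReal
    _ ≤ liminf (fun _ : ℕ => ENNReal.ofReal K) atTop :=
        liminf_le_liminf (Eventually.of_forall hbd)
    _ = ENNReal.ofReal K := liminf_const _

/-- Weak lower semicontinuity of the relative entropy in its first argument. -/
theorem klDiv_le_of_tendsto [PseudoMetricSpace Ω] [BorelSpace Ω]
    {Q : ProbabilityMeasure Ω} {Qs : ℕ → ProbabilityMeasure Ω} (hQ : Tendsto Qs atTop (𝓝 Q))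
    {Ks : ℕ → ℝ} (hKs : Tendsto Ks atTop (𝓝 K)) (hKs0 : ∀ k, 0 ≤ Ks k)
    (h : ∀ k, klDiv (Qs k : Measure Ω) ρ ≤ ENNReal.ofReal (Ks k)) :
    klDiv (Q : Measure Ω) ρ ≤ ENNReal.ofReal K := by
  refine klDiv_le_of_forall_bounded fun f M hf hM =>
    integral_le_of_forall_boundedContinuous (fun g => ?_) hf hM
  have h1 := (ProbabilityMeasure.tendsto_iff_forall_integral_tendsto.1 hQ) g
  exact le_of_tendsto_of_tendsto' h1 (hKs.add_const _) fun k =>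
    integral_le_of_klDiv_le (hKs0 k) (h k) g.continuous.measurable (M := ‖g‖) g.norm_coe_le_norm

end Entropy

/-! ### Density of couplings with finite entropy -/

section Block

open InformationTheory

variable {E F ι κ : Type*} [MeasurableSpace E] [MeasurableSpace F] [Fintype ι] [Fintype κ]

/-- Block approximation of a coupling `γ`: on each cell `{I = i} ×ˢ {J = j}` the measure `γ` is
replaced by the normalized product of `μ` and `ν` with the same total mass. A cell over which `μ`
or `ν` vanishes has `γ`-mass zero, so the junk value of `cond` there is harmless. -/
def blockCoupling (μ : Measure E) (ν : Measure F) (γ : Measure (E × F)) (I : E → ι) (J : F → κ) :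
    Measure (E × F) :=
  ∑ i, ∑ j, γ ((I ⁻¹' {i}) ×ˢ (J ⁻¹' {j})) •
    (ProbabilityTheory.cond μ (I ⁻¹' {i})).prod (ProbabilityTheory.cond ν (J ⁻¹' {j}))

variable {μ : Measure E} {ν : Measure F} {γ : Measure (E × F)} {I : E → ι} {J : F → κ}

theorem blockCoupling_prod (S : Set E) (T : Set F) :
    blockCoupling μ ν γ I J (S ×ˢ T) = ∑ i, ∑ j, γ ((I ⁻¹' {i}) ×ˢ (J ⁻¹' {j})) *
      (ProbabilityTheory.cond μ (I ⁻¹' {i}) S * ProbabilityTheory.cond ν (J ⁻¹' {j}) T) := by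
  simp [blockCoupling, Measure.finsetSum_apply]

theorem cond_preimage_of_ne {ι : Type*} [MeasurableSpace ι] [MeasurableSingletonClass ι]
    {I : E → ι} (hI : Measurable I) {i i' : ι} (h : i' ≠ i) :
    ProbabilityTheory.cond μ (I ⁻¹' {i'}) (I ⁻¹' {i}) = 0 := by
  rw [ProbabilityTheory.cond_apply (hI (measurableSet_singleton i')), ← Set.preimage_inter,
    Set.singleton_inter_eq_empty.2 (by simpa using h)]
  simp

theorem measure_prod_le_left (hγ : γ ∈ Couplings μ ν) {A : Set E} (hA : MeasurableSet A)
    (B : Set F) : γ (A ×ˢ B) ≤ μ A := by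
  rw [← hγ.2.1, Measure.map_apply measurable_fst hA]
  exact measure_mono fun p hp => hp.1

theorem measure_prod_le_right (hγ : γ ∈ Couplings μ ν) (A : Set E) {B : Set F}
    (hB : MeasurableSet B) : γ (A ×ˢ B) ≤ ν B := by
  rw [← hγ.2.2, Measure.map_apply measurable_snd hB]
  exact measure_mono fun p hp => hp.2

variable [MeasurableSpace ι] [MeasurableSingletonClass ι]
  [MeasurableSpace κ] [MeasurableSingletonClass κ]

theorem sum_cell_right (hγ : γ ∈ Couplings μ ν) {A : Set E} (hA : MeasurableSet A)
    (hJ : Measurable J) : ∑ j, γ (A ×ˢ (J ⁻¹' {j})) = μ A := by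
  have h := sum_measure_preimage_singleton (μ := γ.restrict (Prod.fst ⁻¹' A)) Finset.univ
    (f := fun p => J p.2) fun j _ => hJ.comp measurable_snd (measurableSet_singleton j)
  rw [← hγ.2.1, Measure.map_apply measurable_fst hA]
  simp only [Finset.coe_univ, Set.preimage_univ, Measure.restrict_apply_univ] at h
  rw [← h]
  refine Finset.sum_congr rfl fun j _ => ?_
  have hm : MeasurableSet ((fun p : E × F => J p.2) ⁻¹' {j}) :=
    hJ.comp measurable_snd (measurableSet_singleton j)
  rw [Measure.restrict_apply hm]
  congr 1
  ext p
  simp [and_comm]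

theorem sum_cell_left (hγ : γ ∈ Couplings μ ν) {B : Set F} (hB : MeasurableSet B)
    (hI : Measurable I) : ∑ i, γ ((I ⁻¹' {i}) ×ˢ B) = ν B := by
  have h := sum_measure_preimage_singleton (μ := γ.restrict (Prod.snd ⁻¹' B)) Finset.univ
    (f := fun p => I p.1) fun i _ => hI.comp measurable_fst (measurableSet_singleton i)
  rw [← hγ.2.2, Measure.map_apply measurable_snd hB]
  simp only [Finset.coe_univ, Set.preimage_univ, Measure.restrict_apply_univ] at h
  rw [← h]
  refine Finset.sum_congr rfl fun j _ => ?_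
  have hm : MeasurableSet ((fun p : E × F => I p.1) ⁻¹' {j}) :=
    hI.comp measurable_fst (measurableSet_singleton j)
  rw [Measure.restrict_apply hm]
  congr 1

variable [IsProbabilityMeasure μ] [IsProbabilityMeasure ν]

theorem map_fst_blockCoupling (hγ : γ ∈ Couplings μ ν) (hI : Measurable I) (hJ : Measurable J) :
    (blockCoupling μ ν γ I J).map Prod.fst = μ := by
  ext S hS
  rw [Measure.map_apply measurable_fst hS, ← Set.prod_univ, blockCoupling_prod]
  conv_rhs => rw [← ProbabilityTheory.sum_meas_smul_cond_fiber hI μ]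
  rw [Measure.finsetSum_apply]
  refine Finset.sum_congr rfl fun i _ => ?_
  rw [Measure.smul_apply, smul_eq_mul, ← sum_cell_right hγ (hI (measurableSet_singleton i)) hJ,
    Finset.sum_mul]
  refine Finset.sum_congr rfl fun j _ => ?_
  by_cases h : ν (J ⁻¹' {j}) = 0
  · have h0 := measure_prod_le_right hγ (I ⁻¹' {i}) (hJ (measurableSet_singleton j))
    rw [h] at h0
    simp [le_antisymm h0 zero_le]
  · have := ProbabilityTheory.cond_isProbabilityMeasure h
    rw [measure_univ, mul_one]

theorem map_snd_blockCoupling (hγ : γ ∈ Couplings μ ν) (hI : Measurable I) (hJ : Measurable J) :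
    (blockCoupling μ ν γ I J).map Prod.snd = ν := by
  ext S hS
  rw [Measure.map_apply measurable_snd hS, ← Set.univ_prod, blockCoupling_prod, Finset.sum_comm]
  conv_rhs => rw [← ProbabilityTheory.sum_meas_smul_cond_fiber hJ ν]
  rw [Measure.finsetSum_apply]
  refine Finset.sum_congr rfl fun j _ => ?_
  rw [Measure.smul_apply, smul_eq_mul, ← sum_cell_left hγ (hJ (measurableSet_singleton j)) hI,
    Finset.sum_mul]
  refine Finset.sum_congr rfl fun i _ => ?_
  by_cases h : μ (I ⁻¹' {i}) = 0
  · have h0 := measure_prod_le_left hγ (hI (measurableSet_singleton i)) (J ⁻¹' {j})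
    rw [h] at h0
    simp [le_antisymm h0 zero_le]
  · have := ProbabilityTheory.cond_isProbabilityMeasure h
    rw [measure_univ, one_mul]

theorem blockCoupling_mem_couplings (hγ : γ ∈ Couplings μ ν) (hI : Measurable I)
    (hJ : Measurable J) : blockCoupling μ ν γ I J ∈ Couplings μ ν := by
  refine ⟨⟨?_⟩, map_fst_blockCoupling hγ hI hJ, map_snd_blockCoupling hγ hI hJ⟩
  have := congrArg (fun m => m Set.univ) (map_fst_blockCoupling hγ hI hJ)
  simpa [Measure.map_apply measurable_fst MeasurableSet.univ] using this

/-- Block approximation preserves the masses of the cells. -/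
theorem map_blockCoupling (hγ : γ ∈ Couplings μ ν) (hI : Measurable I) (hJ : Measurable J) :
    (blockCoupling μ ν γ I J).map (Prod.map I J) = γ.map (Prod.map I J) := by
  refine Measure.ext_of_singleton fun ⟨i, j⟩ => ?_
  rw [Measure.map_apply (hI.prodMap hJ) (measurableSet_singleton _),
    Measure.map_apply (hI.prodMap hJ) (measurableSet_singleton _), ← Set.singleton_prod_singleton,
    Set.preimage_prod_map_prod, blockCoupling_prod, Finset.sum_eq_single i, Finset.sum_eq_single j]
  · have hA := measure_prod_le_left hγ (hI (measurableSet_singleton i)) (J ⁻¹' {j})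
    have hB := measure_prod_le_right hγ (I ⁻¹' {i}) (hJ (measurableSet_singleton j))
    by_cases h : γ ((I ⁻¹' {i}) ×ˢ (J ⁻¹' {j})) = 0
    · simp [h]
    · rw [ProbabilityTheory.cond_apply_self (fun h0 => h (le_antisymm (h0 ▸ hA) zero_le))
        (measure_ne_top _ _), ProbabilityTheory.cond_apply_self
        (fun h0 => h (le_antisymm (h0 ▸ hB) zero_le)) (measure_ne_top _ _)]
      simp
  · intro j' _ h
    rw [cond_preimage_of_ne hJ h]; simp
  · simp
  · intro i' _ h
    simp [cond_preimage_of_ne hI h]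
  · simp

/-- The block approximation has a density with respect to `μ.prod ν` that is constant on each
cell, hence bounded. -/
theorem blockCoupling_le (hγ : γ ∈ Couplings μ ν) (hI : Measurable I) (hJ : Measurable J) :
    ∃ C : ℝ≥0, blockCoupling μ ν γ I J ≤ C • μ.prod ν := by
  let c : ι → κ → ℝ≥0∞ := fun i j => γ ((I ⁻¹' {i}) ×ˢ (J ⁻¹' {j})) *
    ((μ (I ⁻¹' {i}))⁻¹ * (ν (J ⁻¹' {j}))⁻¹)
  have hc : ∑ i, ∑ j, c i j ≠ ⊤ := by
    refine ENNReal.sum_ne_top.2 fun i _ => ENNReal.sum_ne_top.2 fun j _ => ?_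
    have hA := measure_prod_le_left hγ (hI (measurableSet_singleton i)) (J ⁻¹' {j})
    have hB := measure_prod_le_right hγ (I ⁻¹' {i}) (hJ (measurableSet_singleton j))
    have := hγ.1
    by_cases h : γ ((I ⁻¹' {i}) ×ˢ (J ⁻¹' {j})) = 0
    · simp [c, h]
    · exact ENNReal.mul_ne_top (measure_ne_top _ _) (ENNReal.mul_ne_top
        (ENNReal.inv_ne_top.2 fun h0 => h (le_antisymm (h0 ▸ hA) zero_le))
        (ENNReal.inv_ne_top.2 fun h0 => h (le_antisymm (h0 ▸ hB) zero_le)))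
  refine ⟨(∑ i, ∑ j, c i j).toNNReal, ?_⟩
  have h1 : blockCoupling μ ν γ I J ≤ (∑ i, ∑ j, c i j) • μ.prod ν := by
    simp_rw [blockCoupling, Finset.sum_smul]
    refine Finset.sum_le_sum fun i _ => Finset.sum_le_sum fun j _ => ?_
    rw [ProbabilityTheory.cond, ProbabilityTheory.cond, Measure.prod_smul_left,
      Measure.prod_smul_right, Measure.prod_restrict, smul_smul, smul_smul]
    intro s
    simp only [c, Measure.smul_apply, smul_eq_mul, mul_assoc]
    gcongr
    exact Measure.restrict_le_self
  intro s
  refine (h1 s).trans_eq ?_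
  simp only [Measure.smul_apply, smul_eq_mul]
  conv_lhs => rw [← ENNReal.coe_toNNReal hc]
  rfl

/-- A probability measure dominated by a multiple of `ρ` has a bounded density, hence finite
relative entropy. -/
theorem klDiv_ne_top_of_le {Ω : Type*} [MeasurableSpace Ω] {P ρ : Measure Ω}
    [IsProbabilityMeasure P] [IsProbabilityMeasure ρ] {C : ℝ≥0} (h : P ≤ C • ρ) :
    klDiv P ρ ≠ ⊤ := by
  have hac : P ≪ ρ := (Measure.absolutelyContinuous_of_le h).trans
    (Measure.smul_absolutelyContinuous (c := C))
  have hle : ∀ᵐ x ∂ρ, P.rnDeriv ρ x ≤ C := by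
    refine ae_le_of_forall_setLIntegral_le_of_sigmaFinite (P.measurable_rnDeriv ρ) fun s _ _ => ?_
    refine (Measure.setLIntegral_rnDeriv_le s).trans ((h s).trans_eq ?_)
    rw [setLIntegral_const]; rfl
  obtain ⟨M, hM⟩ := (isCompact_Icc (a := (0 : ℝ)) (b := C)).bddAbove_image
    continuous_klFun.continuousOn
  rw [klDiv_eq_lintegral_klFun_of_ac hac]
  have : ∫⁻ x, ENNReal.ofReal (klFun (P.rnDeriv ρ x).toReal) ∂ρ ≤ ∫⁻ _, ENNReal.ofReal M ∂ρ := by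
    refine lintegral_mono_ae (hle.mono fun x hx => ENNReal.ofReal_le_ofReal
      (hM ⟨_, ⟨ENNReal.toReal_nonneg, ?_⟩, rfl⟩))
    simpa using ENNReal.toReal_mono ENNReal.coe_ne_top hx
  refine (this.trans_lt ?_).ne
  simp

end Block

section Density

open InformationTheory

variable {E F : Type*} [NormedAddCommGroup E] [NormedAddCommGroup F]
  [MeasurableSpace E] [MeasurableSpace F] [BorelSpace E] [BorelSpace F]
  [SecondCountableTopology E] [SecondCountableTopology F]

/-- There are measurable maps with finitely many values, composed with which a sequence of points
approximates the identity pointwise. -/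
theorem exists_quantization (E : Type*) [NormedAddCommGroup E] [MeasurableSpace E] [BorelSpace E]
    [SecondCountableTopology E] : ∃ (I : ∀ n : ℕ, E → Fin (n + 1)) (e : ℕ → E),
      (∀ n, Measurable (I n)) ∧ ∀ x, Tendsto (fun n => e (I n x)) atTop (𝓝 x) := by
  let e := TopologicalSpace.denseSeq E
  have hle : ∀ n x, SimpleFunc.nearestPtInd e n x < n + 1 := fun n x =>
    Nat.lt_succ_of_le (SimpleFunc.nearestPtInd_le e n x)
  refine ⟨fun n x => ⟨SimpleFunc.nearestPtInd e n x, hle n x⟩, e, fun n => ?_, fun x => ?_⟩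
  · refine measurable_to_countable' fun i => ?_
    have : (fun x => (⟨SimpleFunc.nearestPtInd e n x, hle n x⟩ : Fin (n + 1))) ⁻¹' {i} =
        SimpleFunc.nearestPtInd e n ⁻¹' {(i : ℕ)} := by
      ext x; simp [Fin.ext_iff]
    rw [this]
    exact SimpleFunc.measurableSet_fiber _ _
  · exact SimpleFunc.tendsto_nearestPt (TopologicalSpace.denseRange_denseSeq E x)

theorem tendsto_integral_min_dist {μ : Measure E} [IsProbabilityMeasure μ] {q : ℕ → E → E}
    (hq : ∀ n, Measurable (q n)) (hlim : ∀ x, Tendsto (fun n => q n x) atTop (𝓝 x)) {C L : ℝ}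
    (hC : 0 ≤ C) (hL : 0 ≤ L) :
    Tendsto (fun n => ∫ x, min C (L * dist (q n x) x) ∂μ) atTop (𝓝 0) := by
  have := tendsto_integral_of_dominated_convergence (μ := μ) (F := fun n x =>
    min C (L * dist (q n x) x)) (f := fun _ => 0) (fun _ => C)
    (fun n => (measurable_const.min (((hq n).dist measurable_id).const_mul L)).aestronglyMeasurable)
    (integrable_const C) (fun n => Eventually.of_forall fun x => by
      rw [Real.norm_of_nonneg (le_min hC (by positivity))]; exact min_le_left _ _)
    (Eventually.of_forall fun x => by
      have h := ((hlim x).dist (tendsto_const_nhds (x := x))).const_mul L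
      have := (tendsto_const_nhds (x := C)).min h
      simpa [hC] using this)
  simpa using this

/-- Couplings of finite entropy are weakly dense among all couplings. Against a bounded Lipschitz
function, `γ` and its block approximation differ by at most the error of rounding each point to a
representative of its cell, and that error is controlled by the marginals alone. -/
theorem exists_tendsto_klDiv_ne_top {μ : Measure E} {ν : Measure F} [IsProbabilityMeasure μ]
    [IsProbabilityMeasure ν] {P : ProbabilityMeasure (E × F)}
    (hP : (P : Measure (E × F)) ∈ Couplings μ ν) :
    ∃ Ps : ℕ → ProbabilityMeasure (E × F), Tendsto Ps atTop (𝓝 P) ∧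
      (∀ n, (Ps n : Measure (E × F)) ∈ Couplings μ ν) ∧
      ∀ n, klDiv (Ps n : Measure (E × F)) (μ.prod ν) ≠ ⊤ := by
  obtain ⟨I, e, hI, he⟩ := exists_quantization E
  obtain ⟨J, e', hJ, he'⟩ := exists_quantization F
  have hQ : ∀ n, blockCoupling μ ν (P : Measure (E × F)) (I n) (J n) ∈ Couplings μ ν :=
    fun n => blockCoupling_mem_couplings hP (hI n) (hJ n)
  have hQp : ∀ n, IsProbabilityMeasure (blockCoupling μ ν (P : Measure (E × F)) (I n) (J n)) :=
    fun n => (hQ n).1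
  let Ps : ℕ → ProbabilityMeasure (E × F) := fun n => ⟨_, hQp n⟩
  have hPs : ∀ n, (Ps n : Measure (E × F)) =
      blockCoupling μ ν (P : Measure (E × F)) (I n) (J n) := fun n => rfl
  refine ⟨Ps, ?_, hQ, fun n => ?_⟩
  · rw [tendsto_iff_forall_lipschitz_integral_tendsto]
    rintro f ⟨C, hC⟩ ⟨L, hL⟩
    have hC0 : 0 ≤ C := dist_nonneg.trans (hC 0 0)
    let q : ℕ → E × F → E × F := fun n p => (e (I n p.1), e' (J n p.2))
    have hqE : ∀ n, Measurable fun x => e (I n x) := fun n =>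
      (measurable_of_countable fun i : Fin (n + 1) => e i).comp (hI n)
    have hqF : ∀ n, Measurable fun x => e' (J n x) := fun n =>
      (measurable_of_countable fun i : Fin (n + 1) => e' i).comp (hJ n)
    have hqm : ∀ n, Measurable (q n) := fun n => (hqE n).prodMap (hqF n)
    have hbd : ∀ p, ‖f p‖ ≤ ‖f 0‖ + C := fun p => by
      have := hC p 0
      rw [dist_eq_norm] at this
      linarith [norm_le_insert' (f p) (f 0)]
    have hfm : Measurable f := hL.continuous.measurable
    have hint : ∀ (R : Measure (E × F)) [IsProbabilityMeasure R] (g : E × F → E × F),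
        Measurable g → Integrable (fun p => f (g p)) R := fun R _ g hg =>
      Integrable.of_bound (hfm.comp hg).aestronglyMeasurable _ (Eventually.of_forall fun p => hbd _)
    have h1 : Tendsto (fun n => ∫ p, f (q n p) ∂(P : Measure (E × F))) atTop
        (𝓝 (∫ p, f p ∂(P : Measure (E × F)))) :=
      tendsto_integral_of_dominated_convergence (fun _ => ‖f 0‖ + C)
        (fun n => (hfm.comp (hqm n)).aestronglyMeasurable) (integrable_const _)
        (fun n => Eventually.of_forall fun p => hbd _)
        (Eventually.of_forall fun p => (hL.continuous.tendsto p).comp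
          ((he p.1).prodMk_nhds (he' p.2)))
    -- `f ∘ q n` depends only on the cell, so the two couplings integrate it equally
    have h2 : ∀ n, ∫ p, f (q n p) ∂(blockCoupling μ ν (P : Measure (E × F)) (I n) (J n)) =
        ∫ p, f (q n p) ∂(P : Measure (E × F)) := fun n => by
      have h := congrArg (fun m => ∫ z, f (e z.1, e' z.2) ∂m)
        (map_blockCoupling (μ := μ) (ν := ν) hP (hI n) (hJ n))
      have hmm := ((hI n).prodMap (hJ n))
      have hsm : ∀ m : Measure (Fin (n + 1) × Fin (n + 1)),
          AEStronglyMeasurable (fun z => f (e z.1, e' z.2)) m := fun m =>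
        (measurable_of_countable _).aestronglyMeasurable
      rwa [integral_map hmm.aemeasurable (hsm _), integral_map hmm.aemeasurable (hsm _)] at h
    have h3 : ∀ n, dist (∫ p, f (q n p) ∂(P : Measure (E × F)))
        (∫ p, f p ∂(blockCoupling μ ν (P : Measure (E × F)) (I n) (J n))) ≤
        (∫ x, min C (L * dist (e (I n x)) x) ∂μ) + ∫ y, min C (L * dist (e' (J n y)) y) ∂ν := by
      intro n
      have := (hQ n).1
      have hgE : Measurable fun x => min C (L * dist (e (I n x)) x) :=
        measurable_const.min (((hqE n).dist measurable_id).const_mul _)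
      have hgF : Measurable fun x => min C (L * dist (e' (J n x)) x) :=
        measurable_const.min (((hqF n).dist measurable_id).const_mul _)
      have hb : ∀ d : ℝ, 0 ≤ d → ‖min C (L * d)‖ ≤ C := fun d hd => by
        rw [Real.norm_of_nonneg (le_min hC0 (by positivity))]; exact min_le_left _ _
      rw [← h2 n, dist_eq_norm, ← integral_sub (hint _ _ (hqm n)) (hint _ (fun p => p) measurable_id)]
      have e1 := integral_map (μ := blockCoupling μ ν (P : Measure (E × F)) (I n) (J n))
        measurable_fst.aemeasurable hgE.aestronglyMeasurable
      have e2 := integral_map (μ := blockCoupling μ ν (P : Measure (E × F)) (I n) (J n))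
        measurable_snd.aemeasurable hgF.aestronglyMeasurable
      rw [(hQ n).2.1] at e1
      rw [(hQ n).2.2] at e2
      have i1 : Integrable (fun p : E × F => min C (L * dist (e (I n p.1)) p.1))
          (blockCoupling μ ν (P : Measure (E × F)) (I n) (J n)) :=
        Integrable.of_bound (hgE.comp measurable_fst).aestronglyMeasurable C
          (Eventually.of_forall fun p => hb _ dist_nonneg)
      have i2 : Integrable (fun p : E × F => min C (L * dist (e' (J n p.2)) p.2))
          (blockCoupling μ ν (P : Measure (E × F)) (I n) (J n)) :=
        Integrable.of_bound (hgF.comp measurable_snd).aestronglyMeasurable C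
          (Eventually.of_forall fun p => hb _ dist_nonneg)
      rw [e1, e2, ← integral_add i1 i2]
      refine norm_integral_le_of_norm_le (i1.add i2) (Eventually.of_forall fun p => ?_)
      rw [← dist_eq_norm]
      have hd1 := hC (q n p) p
      have hd2 := hL.dist_le_mul (q n p) p
      have ha : 0 ≤ (L : ℝ) * dist (e (I n p.1)) p.1 := by positivity
      have hb : 0 ≤ (L : ℝ) * dist (e' (J n p.2)) p.2 := by positivity
      have hd3 : dist (q n p) p ≤ dist (e (I n p.1)) p.1 + dist (e' (J n p.2)) p.2 := by
        rw [Prod.dist_eq]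
        exact max_le_add_of_nonneg dist_nonneg dist_nonneg
      have hd4 := mul_le_mul_of_nonneg_left hd3 L.coe_nonneg
      rcases min_cases C (L * dist (e (I n p.1)) p.1) with h | h <;>
      rcases min_cases C (L * dist (e' (J n p.2)) p.2) with h' | h' <;>
      linarith [h.1, h'.1]
    have h4 := (tendsto_integral_min_dist (μ := μ) hqE he hC0 L.coe_nonneg).add
      (tendsto_integral_min_dist (μ := ν) hqF he' hC0 L.coe_nonneg)
    rw [add_zero] at h4
    simp only [hPs]
    exact h1.congr_dist (squeeze_zero (fun n => dist_nonneg) h3 h4)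
  · rw [hPs]
    obtain ⟨C, hC⟩ := blockCoupling_le hP (hI n) (hJ n)
    exact klDiv_ne_top_of_le hC

end Density

/-! ### Optimality of weak limits -/

section Optimality

open InformationTheory

theorem toReal_entTerm {Z : Type*} [MeasurableSpace Z] {P ρ : Measure Z} [IsProbabilityMeasure P]
    [IsProbabilityMeasure ρ] {ε : ℝ} (hε : 0 ≤ ε) :
    (entTerm ε P ρ).toReal = ε * (klDiv P ρ).toReal := by
  rw [entTerm, KLD_eq_klDiv, ENNReal.toReal_mul, ENNReal.toReal_ofReal hε]

theorem entTerm_ne_top {Z : Type*} [MeasurableSpace Z] {P ρ : Measure Z} [IsProbabilityMeasure P]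
    [IsProbabilityMeasure ρ] (h : klDiv P ρ ≠ ⊤) (ε : ℝ) : entTerm ε P ρ ≠ ⊤ := by
  rw [entTerm, KLD_eq_klDiv]
  exact ENNReal.mul_ne_top ENNReal.ofReal_ne_top h

theorem klDiv_ne_top_of_entTerm {Z : Type*} [MeasurableSpace Z] {P ρ : Measure Z}
    [IsProbabilityMeasure P] [IsProbabilityMeasure ρ] {ε : ℝ} (hε : 0 < ε)
    (h : entTerm ε P ρ ≠ ⊤) : klDiv P ρ ≠ ⊤ := by
  rw [entTerm, KLD_eq_klDiv] at h
  intro h0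
  rw [h0, ENNReal.mul_top (by simpa using hε)] at h
  exact h rfl

variable {E F : Type*} [NormedAddCommGroup E] [NormedAddCommGroup F]
  [MeasurableSpace E] [MeasurableSpace F] {μ : Measure E} {ν : Measure F}

theorem GWCost_nonneg (γ : Measure (E × F)) : 0 ≤ GWCost γ :=
  integral_nonneg fun _ => sq_nonneg _

theorem SEps_le {ε : ℝ} {γ : Measure (E × F)} (hγ : γ ∈ Couplings μ ν)
    (h : entTerm ε γ (μ.prod ν) ≠ ⊤) :
    SEps ε μ ν ≤ GWCost γ + (entTerm ε γ (μ.prod ν)).toReal := by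
  refine csInf_le ⟨0, ?_⟩ ⟨γ, hγ, h, rfl⟩
  rintro _ ⟨γ', -, -, rfl⟩
  exact add_nonneg (GWCost_nonneg _) ENNReal.toReal_nonneg

theorem eq_SEps_of_forall_le {ε : ℝ} {π : Measure (E × F)} (hπ : π ∈ Couplings μ ν)
    (h : entTerm ε π (μ.prod ν) ≠ ⊤)
    (hle : ∀ γ ∈ Couplings μ ν, entTerm ε γ (μ.prod ν) ≠ ⊤ →
      GWCost π + (entTerm ε π (μ.prod ν)).toReal ≤ GWCost γ + (entTerm ε γ (μ.prod ν)).toReal) :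
    GWCost π + (entTerm ε π (μ.prod ν)).toReal = SEps ε μ ν := by
  symm
  unfold SEps
  refine IsLeast.csInf_eq ⟨⟨π, hπ, h, rfl⟩, ?_⟩
  rintro _ ⟨γ, hγ, hγt, rfl⟩
  exact hle γ hγ hγt

variable [BorelSpace E] [BorelSpace F] [SecondCountableTopology E] [SecondCountableTopology F]
  [IsProbabilityMeasure μ] [IsProbabilityMeasure ν]

/-- A weak limit of minimizers for `δ k → ε > 0` minimizes the limit objective: lower
semicontinuity of the relative entropy is applied to the bound on `KL(Ps k)` obtained by comparing
`Ps k` with a competitor. -/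
theorem optimal_of_tendsto_of_pos (h4μ : Integrable (fun x => ‖x‖ ^ 4) μ)
    (h4ν : Integrable (fun y => ‖y‖ ^ 4) ν) {δ : ℕ → ℝ} {ε : ℝ} (hε : 0 < ε)
    (hδε : ∀ k, ε ≤ δ k) (hδ : Tendsto δ atTop (𝓝 ε)) {P : ProbabilityMeasure (E × F)}
    {Ps : ℕ → ProbabilityMeasure (E × F)} (hP : Tendsto Ps atTop (𝓝 P))
    (hPs : ∀ k, (Ps k : Measure (E × F)) ∈ Couplings μ ν)
    (hopt : ∀ k, entTerm (δ k) (Ps k : Measure (E × F)) (μ.prod ν) ≠ ⊤ ∧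
      GWCost (Ps k : Measure (E × F)) +
        (entTerm (δ k) (Ps k : Measure (E × F)) (μ.prod ν)).toReal = SEps (δ k) μ ν) :
    entTerm ε (P : Measure (E × F)) (μ.prod ν) ≠ ⊤ ∧
      GWCost (P : Measure (E × F)) + (entTerm ε (P : Measure (E × F)) (μ.prod ν)).toReal =
        SEps ε μ ν := by
  have hPc := mem_couplings_of_tendsto hP hPs
  have hGW := tendsto_GWCost h4μ h4ν hP hPc hPs
  have hkl : ∀ k, klDiv (Ps k : Measure (E × F)) (μ.prod ν) ≠ ⊤ := fun k =>
    klDiv_ne_top_of_entTerm (hε.trans_le (hδε k)) (hopt k).1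
  have key : ∀ γ ∈ Couplings μ ν, klDiv γ (μ.prod ν) ≠ ⊤ →
      klDiv (P : Measure (E × F)) (μ.prod ν) ≤ ENNReal.ofReal
        ((GWCost γ + ε * (klDiv γ (μ.prod ν)).toReal - GWCost (P : Measure (E × F))) / ε) ∧
      0 ≤ (GWCost γ + ε * (klDiv γ (μ.prod ν)).toReal - GWCost (P : Measure (E × F))) / ε := by
    intro γ hγ hγt
    have := hγ.1
    have hle : ∀ k, (klDiv (Ps k : Measure (E × F)) (μ.prod ν)).toReal ≤
        (GWCost γ + δ k * (klDiv γ (μ.prod ν)).toReal - GWCost (Ps k : Measure (E × F))) / ε := by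
      intro k
      have hk := (hopt k).2.trans_le (SEps_le hγ (entTerm_ne_top hγt (δ k)))
      have hδ0 := hε.le.trans (hδε k)
      rw [toReal_entTerm hδ0, toReal_entTerm hδ0] at hk
      rw [le_div_iff₀ hε]
      have := mul_le_mul_of_nonneg_right (hδε k)
        (ENNReal.toReal_nonneg (a := klDiv (Ps k : Measure (E × F)) (μ.prod ν)))
      linarith
    have hlim := (((hδ.mul_const (klDiv γ (μ.prod ν)).toReal).const_add (GWCost γ)).sub
      hGW).div_const ε
    have h0 := fun k => ENNReal.toReal_nonneg.trans (hle k)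
    refine ⟨klDiv_le_of_tendsto hP hlim h0 fun k => ?_, ge_of_tendsto' hlim h0⟩
    rw [← ENNReal.ofReal_toReal (hkl k)]
    exact ENNReal.ofReal_le_ofReal (hle k)
  have hPt : klDiv (P : Measure (E × F)) (μ.prod ν) ≠ ⊤ :=
    ne_top_of_le_ne_top ENNReal.ofReal_ne_top (key _ (hPs 0) (hkl 0)).1
  refine ⟨entTerm_ne_top hPt ε, eq_SEps_of_forall_le hPc (entTerm_ne_top hPt ε) fun γ hγ hγt => ?_⟩
  have := hγ.1
  obtain ⟨h1, h2⟩ := key γ hγ (klDiv_ne_top_of_entTerm hε hγt)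
  have h3 := ENNReal.toReal_le_of_le_ofReal h2 h1
  rw [le_div_iff₀ hε] at h3
  rw [toReal_entTerm hε.le, toReal_entTerm hε.le]
  linarith

/-- A weak limit of minimizers for `δ k → 0` minimizes the unregularized objective: competitors of
finite entropy are handled directly, and they are weakly dense among all couplings. -/
theorem optimal_of_tendsto_zero (h4μ : Integrable (fun x => ‖x‖ ^ 4) μ)
    (h4ν : Integrable (fun y => ‖y‖ ^ 4) ν) {δ : ℕ → ℝ}
    (hδ0 : ∀ k, 0 ≤ δ k) (hδ : Tendsto δ atTop (𝓝 0)) {P : ProbabilityMeasure (E × F)}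
    {Ps : ℕ → ProbabilityMeasure (E × F)} (hP : Tendsto Ps atTop (𝓝 P))
    (hPs : ∀ k, (Ps k : Measure (E × F)) ∈ Couplings μ ν)
    (hopt : ∀ k, GWCost (Ps k : Measure (E × F)) +
        (entTerm (δ k) (Ps k : Measure (E × F)) (μ.prod ν)).toReal = SEps (δ k) μ ν) :
    entTerm 0 (P : Measure (E × F)) (μ.prod ν) ≠ ⊤ ∧
      GWCost (P : Measure (E × F)) + (entTerm 0 (P : Measure (E × F)) (μ.prod ν)).toReal =
        SEps 0 μ ν := by
  have hPc := mem_couplings_of_tendsto hP hPs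
  have hGW := tendsto_GWCost h4μ h4ν hP hPc hPs
  have hzero : ∀ γ : Measure (E × F), entTerm 0 γ (μ.prod ν) = 0 := fun γ => by simp [entTerm]
  have key : ∀ γ ∈ Couplings μ ν, klDiv γ (μ.prod ν) ≠ ⊤ →
      GWCost (P : Measure (E × F)) ≤ GWCost γ := by
    intro γ hγ hγt
    have := hγ.1
    have hlim := (hδ.mul_const (klDiv γ (μ.prod ν)).toReal).const_add (GWCost γ)
    rw [zero_mul, add_zero] at hlim
    refine le_of_tendsto_of_tendsto' hGW hlim fun k => ?_
    have hk := (hopt k).trans_le (SEps_le hγ (entTerm_ne_top hγt (δ k)))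
    rw [toReal_entTerm (hδ0 k) (P := γ)] at hk
    linarith [ENNReal.toReal_nonneg
      (a := entTerm (δ k) (Ps k : Measure (E × F)) (μ.prod ν))]
  refine ⟨by simp [hzero], eq_SEps_of_forall_le hPc (by simp [hzero]) fun γ hγ _ => ?_⟩
  simp only [hzero, ENNReal.toReal_zero, add_zero]
  let G : ProbabilityMeasure (E × F) := ⟨γ, hγ.1⟩
  obtain ⟨Gs, hGs, hGsc, hGst⟩ := exists_tendsto_klDiv_ne_top (P := G) hγ
  exact ge_of_tendsto' (tendsto_GWCost h4μ h4ν hGs hγ hGsc) fun n => key _ (hGsc n) (hGst n)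

end Optimality

/-- **Convergence of entropic GW optimal plans.**
If `ε_k ↘ ε ≥ 0` and `π_k` is optimal for `S_{ε_k}(μ,ν)`, then along a subsequence the plans
`π_k` converge weakly to some coupling `π` which is optimal for `S_ε(μ,ν)`. -/
theorem egw_convergence_of_plans (dx dy : ℕ)
    (μ : Measure (EuclideanSpace ℝ (Fin dx))) (ν : Measure (EuclideanSpace ℝ (Fin dy)))
    [IsProbabilityMeasure μ] [IsProbabilityMeasure ν]
    (h4μ : Integrable (fun x => ‖x‖ ^ 4) μ) (h4ν : Integrable (fun y => ‖y‖ ^ 4) ν)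
    (εs : ℕ → ℝ) (ε : ℝ) (hε : 0 ≤ ε) (hεs : ∀ k, 0 ≤ εs k) (hmono : Antitone εs)
    (hlim : Filter.Tendsto εs Filter.atTop (nhds ε))
    (πs : ℕ → Measure (EuclideanSpace ℝ (Fin dx) × EuclideanSpace ℝ (Fin dy)))
    (hπs : ∀ k, πs k ∈ Couplings μ ν)
    (hopt : ∀ k, entTerm (εs k) (πs k) (μ.prod ν) ≠ ⊤ ∧
      GWCost (πs k) + (entTerm (εs k) (πs k) (μ.prod ν)).toReal = SEps (εs k) μ ν) :
    ∃ φ : ℕ → ℕ, StrictMono φ ∧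
      ∃ π ∈ Couplings μ ν,
        (∀ f : BoundedContinuousFunction (EuclideanSpace ℝ (Fin dx) × EuclideanSpace ℝ (Fin dy)) ℝ,
          Filter.Tendsto (fun j => ∫ p, f p ∂(πs (φ j))) Filter.atTop (nhds (∫ p, f p ∂π))) ∧
        entTerm ε π (μ.prod ν) ≠ ⊤ ∧
        GWCost π + (entTerm ε π (μ.prod ν)).toReal = SEps ε μ ν := by
  let Ps : ℕ → ProbabilityMeasure (EuclideanSpace ℝ (Fin dx) × EuclideanSpace ℝ (Fin dy)) :=
    fun k => ⟨πs k, (hπs k).1⟩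
  obtain ⟨P, φ, hφ, hP⟩ := exists_subseq_tendsto (Ps := Ps) hπs
  have hPs : ∀ k, (((Ps ∘ φ) k : ProbabilityMeasure _) : Measure _) ∈ Couplings μ ν :=
    fun k => hπs (φ k)
  refine ⟨φ, hφ, P, mem_couplings_of_tendsto hP hPs,
    fun f => ProbabilityMeasure.tendsto_iff_forall_integral_tendsto.1 hP f, ?_⟩
  have hδ := hlim.comp hφ.tendsto_atTop
  rcases hε.eq_or_lt with rfl | hpos
  · exact optimal_of_tendsto_zero h4μ h4ν (fun k => hεs (φ k)) hδ hP hPs fun k => (hopt (φ k)).2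
  · exact optimal_of_tendsto_of_pos h4μ h4ν hpos (fun k => hmono.le_of_tendsto hlim (φ k)) hδ hP
      hPs fun k => hopt (φ k)
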